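/- arXiv:0706.0089 — 2 statements merged into one kernel-verified Lean document; each statement's English description precedes it below -/
import Mathlib

section
/- Let n ≥ 2. The map s : S_n → S̃_n satisfies p ∘ s = id_{S_n}, and the map Z/2Z × S_n → S̃_n sending (u, x) to z^u · s(x) is a bijection; in other words, every element of S̃_n has a unique normal form z^u · s(x) with u ∈ {0,1} and x ∈ S_n. -/
open Equiv
open scoped Classical

/-- Generator `z` as an element of the free group. -/
def zF (n : ℕ) : FreeGroup (Fin (n-1) ⊕ Unit) := FreeGroup.of (Sum.inr ())

/-- Generator `τ̃ᵢ` as an element of the free group. -/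
def tF (n : ℕ) (i : Fin (n-1)) : FreeGroup (Fin (n-1) ⊕ Unit) := FreeGroup.of (Sum.inl i)

/-- Relations of the spin extension of the symmetric group. -/
def spinRels (n : ℕ) : Set (FreeGroup (Fin (n-1) ⊕ Unit)) :=
  {zF n * zF n} ∪
  {w | ∃ i : Fin (n-1), w = zF n * tF n i * (tF n i * zF n)⁻¹} ∪
  {w | ∃ i : Fin (n-1), w = tF n i * tF n i * (zF n)⁻¹} ∪
  {w | ∃ i j : Fin (n-1), 1 < |(i : ℤ) - (j : ℤ)| ∧ w = tF n i * tF n j * (zF n * tF n j * tF n i)⁻¹} ∪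
  {w | ∃ i j : Fin (n-1), (j : ℕ) = (i : ℕ) + 1 ∧
        w = tF n i * tF n j * tF n i * (tF n j * tF n i * tF n j)⁻¹}

/-- The spin extension `S̃ₙ` of the symmetric group, as a presented group. -/
abbrev SpinSym (n : ℕ) := PresentedGroup (spinRels n)

/-- The central element `z` of `S̃ₙ`. -/
def zt (n : ℕ) : SpinSym n := PresentedGroup.of (Sum.inr ())

/-- The generator `τ̃ᵢ` of `S̃ₙ`. -/
def tt (n : ℕ) (i : Fin (n-1)) : SpinSym n := PresentedGroup.of (Sum.inl i)

/-- `i` as an element of `Fin n`. -/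
def finL (n : ℕ) (i : Fin (n-1)) : Fin n := ⟨i, by have := i.2; omega⟩

/-- `i+1` as an element of `Fin n`. -/
def finR (n : ℕ) (i : Fin (n-1)) : Fin n := ⟨(i : ℕ) + 1, by have := i.2; omega⟩

/-- `τ̃ₖ` for a natural number index, `1` out of range. -/
def ttN (n : ℕ) (k : ℕ) : SpinSym n := if h : k < n - 1 then tt n ⟨k, h⟩ else 1

/-- For `i ≤ j`, the word `τ̃ᵢ·τ̃ᵢ₊₁⋯τ̃ⱼ₋₂·τ̃ⱼ₋₁·τ̃ⱼ₋₂⋯τ̃ᵢ₊₁·τ̃ᵢ` (equal to `1` when `i = j`). -/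
def ttilCore (n i j : ℕ) : SpinSym n :=
  (((List.range' i (j - i)) ++ (List.range' i (j - 1 - i)).reverse).map (ttN n)).prod

/-- The lifted transpositions `τ̃_{i,j}`, with `τ̃_{j,i} = z·τ̃_{i,j}` for `i < j`,
and `τ̃_{k,k} = 1`. -/
def ttil (n i j : ℕ) : SpinSym n := if j < i then zt n * ttilCore n j i else ttilCore n i j

/-- `i` is the sequence of indices of a factorization of `x` as a product of
transpositions `t_{i_0,0} ⋯ t_{i_{n-1},n-1}` with `i_k ≤ k`. -/
def IsFactorization (n : ℕ) (x : Equiv.Perm (Fin n)) (i : Fin n → Fin n) : Prop :=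
  (∀ k, i k ≤ k) ∧ x = ((List.finRange n).map (fun k => Equiv.swap (i k) k)).prod

/-- The section `s : Sₙ → S̃ₙ`, defined from the unique factorization
`x = t_{i_0,0} ⋯ t_{i_{n-1},n-1}` by `s x = τ̃_{i_0,0} ⋯ τ̃_{i_{n-1},n-1}`. -/
noncomputable def sec (n : ℕ) (x : Equiv.Perm (Fin n)) : SpinSym n :=
  if h : ∃ i, IsFactorization n x i then
    ((List.finRange n).map (fun k => ttil n (h.choose k).val k.val)).prod
  else 1

/-- The `2`-cocycle `c : Sₙ × Sₙ → ℤ/2ℤ` defined by `s(x)·s(y) = z^{c(x,y)}·s(x·y)`. -/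
noncomputable def coc (n : ℕ) (x y : Equiv.Perm (Fin n)) : ZMod 2 :=
  if sec n x * sec n y = sec n (x * y) then 0 else 1

/-! ### Coxeter relations of type `A` -/

/-- The Coxeter relations of the symmetric group on `n` letters, for a sequence `t` in a group. -/
structure CoxeterRelations {G : Type*} [Group G] (n : ℕ) (t : ℕ → G) : Prop where
  sq : ∀ i, t i * t i = 1
  comm : ∀ i j, i + 1 < j → Commute (t i) (t j)
  braid : ∀ i, i + 2 < n → t i * t (i + 1) * t i = t (i + 1) * t i * t (i + 1)

/-- The product `t (i + l - 1) ⋯ t (i + 1) * t i`. -/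
def descProd {G : Type*} [Group G] (t : ℕ → G) (i : ℕ) : ℕ → G
  | 0 => 1
  | l + 1 => t (i + l) * descProd t i l

section Coxeter

variable {G : Type*} [Group G] {n : ℕ} {t : ℕ → G}

theorem descProd_succ' (t : ℕ → G) (i l : ℕ) :
    descProd t i (l + 1) = descProd t (i + 1) l * t i := by
  induction l with
  | zero => simp [descProd]
  | succ l ih =>
    rw [descProd, ih, descProd, ← mul_assoc, show i + 1 + l = i + (l + 1) by omega]

theorem commute_descProd {g : G} {i l : ℕ} (h : ∀ k, i ≤ k → k < i + l → Commute (t k) g) :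
    Commute (descProd t i l) g := by
  induction l with
  | zero => exact Commute.one_left g
  | succ l ih =>
    exact (h _ (by omega) (by omega)).mul_left (ih fun k hk hk' => h k hk (by omega))

theorem CoxeterRelations.descProd_mul (ht : CoxeterRelations n t) {i j l : ℕ} (hij : i ≤ j)
    (hj : j + 1 < i + l) (hl : i + l < n) :
    descProd t i l * t (j + 1) = t j * descProd t i l := by
  induction l with
  | zero => omega
  | succ l ih =>
    rcases Nat.lt_or_ge (j + 1) (i + l) with h | h
    · rw [descProd, mul_assoc, ih h (by omega), ← mul_assoc, ← mul_assoc,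
        (ht.comm j (i + l) h).eq]
    · obtain ⟨l, rfl⟩ : ∃ l', l = l' + 1 := ⟨l - 1, by omega⟩
      obtain rfl : j = i + l := by omega
      have hc : Commute (descProd t i l) (t (i + l + 1)) :=
        commute_descProd fun k _ hk => ht.comm _ _ (by omega)
      rw [descProd, descProd, ← add_assoc, mul_assoc, mul_assoc, hc.eq]
      simp only [← mul_assoc]
      rw [ht.braid _ (by omega)]

/-- The subgroup generated by the first `m` terms of `t`. -/
def initialSubgroup (t : ℕ → G) (m : ℕ) : Subgroup G :=
  Subgroup.closure (t '' Set.Iio m)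

theorem mem_initialSubgroup {m k : ℕ} (h : k < m) : t k ∈ initialSubgroup t m :=
  Subgroup.subset_closure ⟨k, h, rfl⟩

theorem CoxeterRelations.exists_eq_mul_descProd (ht : CoxeterRelations n t) {m : ℕ}
    (hm : m + 1 < n) {x : G} (hx : x ∈ initialSubgroup t (m + 1)) :
    ∃ h ∈ initialSubgroup t m, ∃ i l, i + l = m + 1 ∧ x = h * descProd t i l := by
  have step : ∀ x : G, ∀ j < m + 1,
      (∃ h ∈ initialSubgroup t m, ∃ i l, i + l = m + 1 ∧ x = h * descProd t i l) →
      ∃ h ∈ initialSubgroup t m, ∃ i l, i + l = m + 1 ∧ x * t j = h * descProd t i l := by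
    rintro _ j hj ⟨h, hh, i, l, hil, rfl⟩
    rcases lt_trichotomy (j + 1) i with hji | rfl | hji
    · refine ⟨h * t j, mul_mem hh (mem_initialSubgroup (by omega)), i, l, hil, ?_⟩
      have hc : Commute (descProd t i l) (t j) :=
        commute_descProd fun k hk _ => (ht.comm j k (by omega)).symm
      rw [mul_assoc, hc.eq, mul_assoc]
    · exact ⟨h, hh, j, l + 1, by omega, by rw [descProd_succ', mul_assoc]⟩
    · rcases Nat.lt_or_ge i j with hij | hij
      · obtain ⟨j, rfl⟩ : ∃ j', j = j' + 1 := ⟨j - 1, by omega⟩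
        refine ⟨h * t j, mul_mem hh (mem_initialSubgroup (by omega)), i, l, hil, ?_⟩
        rw [mul_assoc, ht.descProd_mul (by omega) (by omega) (by omega), mul_assoc]
      · obtain rfl : i = j := by omega
        obtain ⟨l, rfl⟩ : ∃ l', l = l' + 1 := ⟨l - 1, by omega⟩
        refine ⟨h, hh, i + 1, l, by omega, ?_⟩
        rw [descProd_succ', mul_assoc, mul_assoc, ht.sq, mul_one]
  induction hx using Subgroup.closure_induction_right with
  | one => exact ⟨1, one_mem _, m + 1, 0, rfl, by simp [descProd]⟩
  | mul_right x _ y hy ih =>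
    obtain ⟨j, hj, rfl⟩ := hy
    exact step x j hj ih
  | mul_inv_cancel x _ y hy ih =>
    obtain ⟨j, hj, rfl⟩ := hy
    rw [inv_eq_of_mul_eq_one_right (ht.sq j)]
    exact step x j hj ih

variable {p : G →* Perm (Fin n)}

theorem apply_eq_self_of_mem_initialSubgroup
    (hp : ∀ k (hk : k + 1 < n), p (t k) = swap ⟨k, by omega⟩ ⟨k + 1, hk⟩)
    {m : ℕ} {x : G} (hx : x ∈ initialSubgroup t m) (a : Fin n) (ha : m < a) : p x a = a := by
  have key : initialSubgroup t m ≤ (MulAction.stabilizer (Perm (Fin n)) a).comap p := by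
    refine (Subgroup.closure_le _).2 ?_
    rintro _ ⟨k, hk, rfl⟩
    have hk' : k < m := hk
    change p (t k) a = a
    rw [hp k (by omega)]
    exact swap_apply_of_ne_of_ne (by simp [Fin.ext_iff]; omega) (by simp [Fin.ext_iff]; omega)
  exact key hx

theorem map_descProd_apply
    (hp : ∀ k (hk : k + 1 < n), p (t k) = swap ⟨k, by omega⟩ ⟨k + 1, hk⟩)
    {i l : ℕ} (h : i + l < n) : p (descProd t i l) ⟨i, by omega⟩ = ⟨i + l, h⟩ := by
  induction l with
  | zero => simp [descProd]
  | succ l ih =>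
    rw [descProd, map_mul, Perm.mul_apply, ih (by omega), hp _ (by omega), swap_apply_left]
    rfl

/-- A group generated by elements satisfying the Coxeter relations maps injectively to the
symmetric group. -/
theorem CoxeterRelations.eq_one_of_map_eq_one (ht : CoxeterRelations n t)
    (hp : ∀ k (hk : k + 1 < n), p (t k) = swap ⟨k, by omega⟩ ⟨k + 1, hk⟩)
    {m : ℕ} (hm : m < n) {x : G} (hx : x ∈ initialSubgroup t m) (hpx : p x = 1) : x = 1 := by
  induction m generalizing x with
  | zero => simpa [initialSubgroup] using hx
  | succ m ih =>
    obtain ⟨h, hh, i, l, hil, rfl⟩ := ht.exists_eq_mul_descProd hm hx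
    have hi : p (h * descProd t i l) ⟨i, by omega⟩ = ⟨i + l, by omega⟩ := by
      rw [map_mul, Perm.mul_apply, map_descProd_apply hp (by omega)]
      exact apply_eq_self_of_mem_initialSubgroup hp hh _ (by simp; omega)
    rw [hpx] at hi
    obtain rfl : l = 0 := by simpa using hi
    simp only [descProd, mul_one] at hpx ⊢
    exact ih (by omega) hh hpx

end Coxeter

/-! ### Relations in the spin extension -/

theorem zt_mul_zt (n : ℕ) : zt n * zt n = 1 :=
  PresentedGroup.one_of_mem (x := zF n * zF n) (by simp [spinRels])

theorem zt_mul_tt (n : ℕ) (i : Fin (n - 1)) : zt n * tt n i = tt n i * zt n :=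
  PresentedGroup.mk_eq_mk_of_mul_inv_mem (x := zF n * tF n i) (y := tF n i * zF n)
    (Or.inl (Or.inl (Or.inl (Or.inr ⟨i, rfl⟩))))

theorem tt_mul_tt (n : ℕ) (i : Fin (n - 1)) : tt n i * tt n i = zt n :=
  PresentedGroup.mk_eq_mk_of_mul_inv_mem (x := tF n i * tF n i) (y := zF n)
    (Or.inl (Or.inl (Or.inr ⟨i, rfl⟩)))

theorem tt_mul_tt_of_lt (n : ℕ) (i j : Fin (n - 1)) (h : (i : ℕ) + 1 < j) :
    tt n i * tt n j = zt n * tt n j * tt n i :=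
  PresentedGroup.mk_eq_mk_of_mul_inv_mem (x := tF n i * tF n j) (y := zF n * tF n j * tF n i)
    (Or.inl (Or.inr ⟨i, j, by rw [lt_abs]; omega, rfl⟩))

theorem tt_braid (n : ℕ) (i j : Fin (n - 1)) (h : (j : ℕ) = i + 1) :
    tt n i * tt n j * tt n i = tt n j * tt n i * tt n j :=
  PresentedGroup.mk_eq_mk_of_mul_inv_mem (x := tF n i * tF n j * tF n i)
    (y := tF n j * tF n i * tF n j) (Or.inr ⟨i, j, h, rfl⟩)

theorem commute_zt (n : ℕ) (g : SpinSym n) : g * zt n = zt n * g := by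
  have h : g ∈ Subgroup.centralizer {zt n} := by
    refine PresentedGroup.generated_by _ _ ?_ g
    rintro (i | _)
    · exact Subgroup.mem_centralizer_singleton_iff.2 (zt_mul_tt n i).symm
    · exact Subgroup.mem_centralizer_singleton_iff.2 rfl
  exact Subgroup.mem_centralizer_singleton_iff.1 h

instance normal_zpowers_zt (n : ℕ) : (Subgroup.zpowers (zt n)).Normal where
  conj_mem x hx g := by
    obtain ⟨k, rfl⟩ := Subgroup.mem_zpowers_iff.1 hx
    have h : Commute g (zt n ^ k) := Commute.zpow_right (commute_zt n g) k
    rwa [h.eq, mul_inv_cancel_right]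

theorem mk_zt (n : ℕ) : (QuotientGroup.mk' (Subgroup.zpowers (zt n))) (zt n) = 1 :=
  (QuotientGroup.eq_one_iff _).2 (Subgroup.mem_zpowers _)

theorem coxeterRelations_mk_ttN (n : ℕ) :
    CoxeterRelations n fun k => QuotientGroup.mk' (Subgroup.zpowers (zt n)) (ttN n k) where
  sq i := by
    rw [← map_mul, ttN]
    split_ifs with h
    · rw [tt_mul_tt, mk_zt]
    · simp
  comm i j hij := by
    rw [commute_iff_eq, ← map_mul, ← map_mul, ttN, ttN]
    split_ifs with hi hj
    · rw [tt_mul_tt_of_lt n _ _ hij, mul_assoc, map_mul, mk_zt, one_mul]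
    all_goals simp
  braid i hi := by
    simp only [← map_mul]
    rw [ttN, ttN, dif_pos (by omega), dif_pos (by omega), tt_braid n _ _ rfl]

/-! ### Nontriviality of the central element -/

/-- The quadratic form `-‖v‖² / 2`, for which the simple roots have value `-1`. -/
noncomputable def rootForm (n : ℕ) : QuadraticForm ℝ (Fin n → ℝ) :=
  LinearMap.BilinMap.toQuadraticMap ((-1 / 2 : ℝ) • dotProductBilin ℝ ℝ)

/-- The simple root `e i - e (i + 1)`. -/
noncomputable def simpleRoot (n : ℕ) (i : Fin (n - 1)) : Fin n → ℝ :=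
  Pi.single (finL n i) 1 - Pi.single (finR n i) 1

theorem rootForm_simpleRoot (n : ℕ) (i : Fin (n - 1)) : rootForm n (simpleRoot n i) = -1 := by
  simp [rootForm, simpleRoot, finL, finR]
  norm_num

theorem polar_rootForm (n : ℕ) (v w : Fin n → ℝ) :
    QuadraticMap.polar (rootForm n) v w = -(v ⬝ᵥ w) := by
  rw [rootForm, LinearMap.BilinMap.polar_toQuadraticMap]
  simp [dotProduct_comm w v]
  ring

theorem simpleRoot_dotProduct (n : ℕ) (i j : Fin (n - 1)) (h : (i : ℕ) < j) :
    simpleRoot n i ⬝ᵥ simpleRoot n j = if (j : ℕ) = i + 1 then -1 else 0 := by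
  have h1 : (i : ℕ) ≠ j := by omega
  have h2 : (i : ℕ) ≠ j + 1 := by omega
  simp only [simpleRoot, sub_dotProduct, single_one_dotProduct, Pi.sub_apply, Pi.single_apply,
    finL, finR, Fin.ext_iff, add_left_inj, h1, h2, if_false, sub_zero, eq_comm (a := (j : ℕ))]
  split_ifs <;> norm_num

/-- The simple root as a unit of the Clifford algebra. -/
noncomputable def rootUnit (n : ℕ) (i : Fin (n - 1)) : (CliffordAlgebra (rootForm n))ˣ where
  val := CliffordAlgebra.ι _ (simpleRoot n i)
  inv := -CliffordAlgebra.ι _ (simpleRoot n i)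
  val_inv := by simp [rootForm_simpleRoot]
  inv_val := by simp [rootForm_simpleRoot]

theorem rootUnit_mul_self (n : ℕ) (i : Fin (n - 1)) : rootUnit n i * rootUnit n i = -1 := by
  ext
  simp [rootUnit, rootForm_simpleRoot]

theorem rootUnit_mul_of_lt (n : ℕ) (i j : Fin (n - 1)) (h : (i : ℕ) + 1 < j) :
    rootUnit n i * rootUnit n j = -1 * rootUnit n j * rootUnit n i := by
  ext
  have := CliffordAlgebra.ι_mul_ι_add_swap (Q := rootForm n) (simpleRoot n i) (simpleRoot n j)
  rw [polar_rootForm, simpleRoot_dotProduct n i j (by omega), if_neg (by omega), neg_zero,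
    map_zero] at this
  simpa [rootUnit] using eq_neg_of_add_eq_zero_left this

theorem rootUnit_braid (n : ℕ) (i j : Fin (n - 1)) (h : (j : ℕ) = i + 1) :
    rootUnit n i * rootUnit n j * rootUnit n i = rootUnit n j * rootUnit n i * rootUnit n j := by
  ext
  have hij := CliffordAlgebra.ι_mul_ι_add_swap (Q := rootForm n) (simpleRoot n i) (simpleRoot n j)
  rw [polar_rootForm, simpleRoot_dotProduct n i j (by omega), if_pos h, neg_neg, map_one] at hij
  have hi := CliffordAlgebra.ι_sq_scalar (rootForm n) (simpleRoot n i)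
  have hj := CliffordAlgebra.ι_sq_scalar (rootForm n) (simpleRoot n j)
  rw [rootForm_simpleRoot, map_neg, map_one] at hi hj
  simp only [rootUnit, Units.val_mul]
  generalize CliffordAlgebra.ι (rootForm n) (simpleRoot n i) = u at *
  generalize CliffordAlgebra.ι (rootForm n) (simpleRoot n j) = v at *
  have huv : u * v = 1 - v * u := eq_sub_of_add_eq hij
  calc u * v * u = u - v * (u * u) := by rw [huv, sub_mul, one_mul, mul_assoc]
    _ = v - (v * v) * u := by rw [hi, hj]; noncomm_ring
    _ = v * u * v := by rw [mul_assoc v u v, huv, mul_sub, mul_one, mul_assoc]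

theorem zt_ne_one (n : ℕ) : zt n ≠ 1 := by
  let f : Fin (n - 1) ⊕ Unit → (CliffordAlgebra (rootForm n))ˣ :=
    Sum.elim (rootUnit n) fun _ => -1
  have hz : FreeGroup.lift f (zF n) = -1 := by simp [zF, f]
  have ht : ∀ i, FreeGroup.lift f (tF n i) = rootUnit n i := fun i => by simp [tF, f]
  have hf : ∀ r ∈ spinRels n, FreeGroup.lift f r = 1 := by
    rintro r ((((rfl | ⟨i, rfl⟩) | ⟨i, rfl⟩) | ⟨i, j, hij, rfl⟩) | ⟨i, j, hij, rfl⟩)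
    · simp [hz]
    · simp [hz, ht]
    · simp only [map_mul, map_inv, hz, ht, rootUnit_mul_self, mul_inv_cancel]
    · simp only [map_mul, map_inv, hz, ht, mul_inv_eq_one]
      rcases lt_abs.1 hij with h | h
      · rw [mul_assoc, rootUnit_mul_of_lt n j i (by omega)]
        simp
      · exact rootUnit_mul_of_lt n i j (by omega)
    · simp only [map_mul, map_inv, ht, mul_inv_eq_one]
      exact rootUnit_braid n i j hij
  intro h
  have h1 : PresentedGroup.toGroup hf (zt n) = -1 := PresentedGroup.toGroup.of hf
  rw [h, map_one, Units.ext_iff, Units.val_neg, Units.val_one] at h1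
  have h2 : algebraMap ℝ (CliffordAlgebra (rootForm n)) 2 = 0 := by
    rw [map_ofNat, ← one_add_one_eq_two]
    nth_rewrite 1 [h1]
    simp
  rw [map_eq_zero] at h2
  norm_num at h2

/-! ### The section -/

theorem exists_take_factorization {n : ℕ} (m : ℕ) (hm : m ≤ n) (x : Perm (Fin n))
    (hx : ∀ k : Fin n, m ≤ k → x k = k) :
    ∃ i : Fin n → Fin n, (∀ k, i k ≤ k) ∧
      x = (((List.finRange n).take m).map fun k => swap (i k) k).prod := by
  induction m generalizing x with
  | zero =>
    refine ⟨id, fun k => le_rfl, ?_⟩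
    ext k
    simp [hx k (Nat.zero_le _)]
  | succ m ih =>
    let a : Fin n := ⟨m, hm⟩
    have ha : x (x⁻¹ a) = a := x.apply_symm_apply a
    have hle : x⁻¹ a ≤ a := by
      by_contra hlt
      have hlt' : m < (x⁻¹ a : Fin n) := not_le.1 hlt
      have := hx (x⁻¹ a) hlt'
      rw [ha] at this
      exact hlt this.ge
    obtain ⟨i, hi, hxi⟩ := ih (by omega) (x * swap (x⁻¹ a) a) fun k hk => by
      rcases eq_or_ne k a with rfl | hka
      · rw [Perm.mul_apply, swap_apply_right, ha]
      · have hmk : m < k := lt_of_le_of_ne hk fun h => hka (Fin.ext h.symm)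
        rw [Perm.mul_apply, swap_apply_of_ne_of_ne _ hka, hx k hmk]
        rintro rfl
        exact absurd hle (not_le.2 hmk)
    refine ⟨Function.update i a (x⁻¹ a), fun k => ?_, ?_⟩
    · rcases eq_or_ne k a with rfl | hka
      · simpa using hle
      · simpa [hka] using hi k
    · have hlen : m < (List.finRange n).length := by simpa using hm
      have hmap : ((List.finRange n).take m).map
            (fun k => swap (Function.update i a (x⁻¹ a) k) k) =
          ((List.finRange n).take m).map fun k => swap (i k) k := by
        refine List.map_congr_left fun k hk => ?_
        obtain ⟨j, hj, rfl⟩ := List.mem_take_iff_getElem.1 hk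
        rw [Function.update_of_ne]
        simp only [List.getElem_finRange, ne_eq, Fin.ext_iff, a]
        simp
        omega
      have hget : (List.finRange n)[m] = a := by simp [a]
      rw [List.take_succ_eq_append_getElem hlen, List.map_append, List.prod_append, hmap, ← hxi,
        hget]
      simp [mul_assoc]

theorem exists_isFactorization {n : ℕ} (x : Perm (Fin n)) : ∃ i, IsFactorization n x i := by
  obtain ⟨i, hi, hx⟩ := exists_take_factorization n le_rfl x fun k hk => absurd k.2 (not_lt.2 hk)
  rw [List.take_of_length_le (by simp)] at hx
  exact ⟨i, hi, hx⟩

theorem ttilCore_self (n i : ℕ) : ttilCore n i i = 1 := by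
  simp [ttilCore]

theorem ttilCore_succ (n i : ℕ) : ttilCore n i (i + 1) = ttN n i := by
  simp [ttilCore]

theorem ttilCore_add_two (n i l : ℕ) :
    ttilCore n i (i + l + 2) = ttN n i * ttilCore n (i + 1) (i + l + 2) * ttN n i := by
  simp only [ttilCore, show i + l + 2 - i = l + 1 + 1 by omega,
    show i + l + 2 - 1 - i = l + 1 by omega, show i + l + 2 - (i + 1) = l + 1 by omega,
    show i + l + 2 - 1 - (i + 1) = l by omega]
  rw [List.range'_succ, List.range'_succ (n := l) (s := i)]
  simp [mul_assoc]

section Section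

variable {n : ℕ} {p : SpinSym n →* Perm (Fin n)}

theorem map_ttN (hpt : ∀ i : Fin (n - 1), p (tt n i) = swap (finL n i) (finR n i))
    (k : ℕ) (hk : k + 1 < n) : p (ttN n k) = swap ⟨k, by omega⟩ ⟨k + 1, hk⟩ := by
  rw [ttN, dif_pos (by omega), hpt]
  rfl

theorem map_ttilCore (hpt : ∀ i : Fin (n - 1), p (tt n i) = swap (finL n i) (finR n i))
    (i l : ℕ) (h : i + l + 1 < n) :
    p (ttilCore n i (i + l + 1)) = swap ⟨i, by omega⟩ ⟨i + l + 1, h⟩ := by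
  induction l generalizing i with
  | zero => exact (congrArg p (ttilCore_succ n i)).trans (map_ttN hpt i h)
  | succ l ih =>
    have ih' := ih (i + 1) (by omega)
    simp only [show i + 1 + l + 1 = i + l + 2 by omega] at ih'
    simp only [show i + (l + 1) + 1 = i + l + 2 by omega]
    rw [ttilCore_add_two, map_mul, map_mul, ih', map_ttN hpt i (by omega)]
    have hswap := swap_mul_swap_mul_swap (x := (⟨i + l + 2, h⟩ : Fin n))
      (y := ⟨i + 1, by omega⟩) (z := ⟨i, by omega⟩) (by simp [Fin.ext_iff]; omega)
      (by simp [Fin.ext_iff]; omega)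
    rwa [swap_comm (⟨i + 1, _⟩ : Fin n) ⟨i, _⟩,
      swap_comm (⟨i + l + 2, _⟩ : Fin n) ⟨i + 1, _⟩] at hswap

theorem map_ttil (hpt : ∀ i : Fin (n - 1), p (tt n i) = swap (finL n i) (finR n i))
    {i j : Fin n} (h : i ≤ j) : p (ttil n i j) = swap i j := by
  rw [ttil, if_neg (not_lt.2 (Fin.le_def.1 h))]
  rcases h.eq_or_lt with rfl | h
  · rw [ttilCore_self, map_one, swap_self]
    rfl
  · obtain ⟨l, hl⟩ := Nat.exists_eq_add_of_lt h
    obtain ⟨j, hj⟩ := j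
    obtain rfl : j = i + l + 1 := hl
    exact map_ttilCore hpt i l hj

theorem map_sec (hpt : ∀ i : Fin (n - 1), p (tt n i) = swap (finL n i) (finR n i))
    (x : Perm (Fin n)) : p (sec n x) = x := by
  have h := exists_isFactorization x
  rw [sec, dif_pos h, map_list_prod, List.map_map]
  refine Eq.trans ?_ h.choose_spec.2.symm
  exact congrArg List.prod (List.map_congr_left fun k _ => map_ttil hpt (h.choose_spec.1 k))

theorem mem_zpowers_zt_of_map_eq_one
    (hn : 0 < n) (hpt : ∀ i : Fin (n - 1), p (tt n i) = swap (finL n i) (finR n i))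
    (hpz : p (zt n) = 1) {g : SpinSym n} (hg : p g = 1) : g ∈ Subgroup.zpowers (zt n) := by
  let t : ℕ → SpinSym n ⧸ Subgroup.zpowers (zt n) :=
    fun k => QuotientGroup.mk' (Subgroup.zpowers (zt n)) (ttN n k)
  have hle : Subgroup.zpowers (zt n) ≤ p.ker := by simpa using hpz
  have hmem : g ∈ (initialSubgroup t (n - 1)).comap (QuotientGroup.mk' _) := by
    refine PresentedGroup.generated_by _ _ ?_ g
    rintro (i | _)
    · have := mem_initialSubgroup (t := t) i.2
      have hi : ttN n i = tt n i := dif_pos i.2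
      simp only [t, hi] at this
      exact this
    · exact Subgroup.mem_comap.2 ((mk_zt n).symm ▸ one_mem _)
  refine (QuotientGroup.eq_one_iff g).1 ?_
  exact (coxeterRelations_mk_ttN n).eq_one_of_map_eq_one
    (p := QuotientGroup.lift _ p hle) (fun k hk => map_ttN hpt k hk)
    (Nat.sub_lt hn one_pos) hmem hg

end Section

theorem zt_pow_val_injective (n : ℕ) : Function.Injective fun u : ZMod 2 => zt n ^ u.val := by
  intro u v h
  have := zt_ne_one n
  fin_cases u <;> fin_cases v <;> first | rfl | simp_all [ZMod.val]

theorem exists_zt_pow_val_eq {n : ℕ} {g : SpinSym n} (hg : g ∈ Subgroup.zpowers (zt n)) :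
    ∃ u : ZMod 2, zt n ^ u.val = g := by
  obtain ⟨k, rfl⟩ := Subgroup.mem_zpowers_iff.1 hg
  refine ⟨k, ?_⟩
  have h2 : zt n ^ (2 : ℤ) = 1 := by rw [zpow_two, zt_mul_zt]
  rw [← zpow_natCast, ZMod.val_intCast, Nat.cast_ofNat]
  conv_rhs => rw [← Int.mul_ediv_add_emod k 2, zpow_add, zpow_mul, h2, one_zpow, one_mul]

theorem section_normal_form (n : ℕ) (hn : 2 ≤ n)
    (p : SpinSym n →* Equiv.Perm (Fin n))
    (hpt : ∀ i : Fin (n-1), p (tt n i) = Equiv.swap (finL n i) (finR n i))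
    (hpz : p (zt n) = 1) :
    (∀ x : Equiv.Perm (Fin n), p (sec n x) = x) ∧
    Function.Bijective
      (fun ux : ZMod 2 × Equiv.Perm (Fin n) => zt n ^ (ux.1.val) * sec n ux.2) := by
  refine ⟨map_sec hpt, ?_, fun g => ?_⟩
  · rintro ⟨u, x⟩ ⟨v, y⟩ h
    have hxy := congrArg p h
    simp only [map_mul, map_pow, hpz, one_pow, one_mul, map_sec hpt] at hxy
    subst hxy
    exact congrArg (·, x) (zt_pow_val_injective n (mul_right_cancel h))
  · obtain ⟨u, hu⟩ := exists_zt_pow_val_eq (g := g * (sec n (p g))⁻¹)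
      (mem_zpowers_zt_of_map_eq_one (by omega) hpt hpz (by
        rw [map_mul, map_inv, map_sec hpt, mul_inv_cancel]))
    exact ⟨(u, p g), by simp [hu]⟩
end

section
/- Let n ≥ 2. For any two transpositions σ = (i j) and ρ = (k l) in S_n with {i,j} ∩ {k,l} = ∅, one has c(σ, ρ) + c(ρ, σ) = 1 in Z/2Z. -/
open Equiv
open scoped Classical

/-- The Clifford algebra of the negative definite form `-∑ xₘ²` on `ℝⁿ`. -/
abbrev NegCl (n : ℕ) : Type :=
  CliffordAlgebra (QuadraticMap.weightedSumSquares ℝ (fun _ : Fin n => (-1 : ℝ)))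

/-- The normalized root `(e_a - e_b) / √2`. -/
noncomputable def rootVec {n : ℕ} (a b : Fin n) : Fin n → ℝ :=
  (√2)⁻¹ • (Pi.single a 1 - Pi.single b 1)

/-- The image of `rootVec a b` in the Clifford algebra. -/
noncomputable def cliffRoot {n : ℕ} (a b : Fin n) : NegCl n := CliffordAlgebra.ι _ (rootVec a b)

theorem weightedSumSquares_neg_one (n : ℕ) (x : Fin n → ℝ) :
    QuadraticMap.weightedSumSquares ℝ (fun _ : Fin n => (-1 : ℝ)) x = -(x ⬝ᵥ x) := by
  simp [QuadraticMap.weightedSumSquares_apply, dotProduct]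

theorem polar_weightedSumSquares_neg_one (n : ℕ) (x y : Fin n → ℝ) :
    QuadraticMap.polar (QuadraticMap.weightedSumSquares ℝ (fun _ : Fin n => (-1 : ℝ))) x y
      = -(2 * (x ⬝ᵥ y)) := by
  simp only [QuadraticMap.polar, weightedSumSquares_neg_one, add_dotProduct, dotProduct_add,
    dotProduct_comm y x]
  ring

theorem rootVec_dotProduct {n : ℕ} (a b c d : Fin n) :
    2 * (rootVec a b ⬝ᵥ rootVec c d) =
      ((if a = c then 1 else 0) - (if a = d then 1 else 0) -
        ((if b = c then 1 else 0) - (if b = d then 1 else 0)) : ℝ) := by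
  have h : (√2 : ℝ)⁻¹ * (√2)⁻¹ = 1 / 2 := by
    rw [← mul_inv, Real.mul_self_sqrt (by norm_num)]; norm_num
  simp only [rootVec, smul_dotProduct, dotProduct_smul, smul_eq_mul, sub_dotProduct,
    single_dotProduct, Pi.sub_apply, Pi.single_apply, one_mul]
  rw [← mul_assoc (√2 : ℝ)⁻¹, h]
  ring

theorem rootVec_add {n : ℕ} (a b c : Fin n) : rootVec a b + rootVec b c = rootVec a c := by
  simp [rootVec, ← smul_add]

theorem cliffRoot_mul_self {n : ℕ} {a b : Fin n} (h : a ≠ b) :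
    cliffRoot a b * cliffRoot a b = -1 := by
  have hd := rootVec_dotProduct a b a b
  simp only [h, h.symm, if_true, if_false] at hd
  have : rootVec a b ⬝ᵥ rootVec a b = 1 := by linarith
  rw [cliffRoot, CliffordAlgebra.ι_sq_scalar, weightedSumSquares_neg_one, this]
  simp

theorem cliffRoot_mul_add_swap {n : ℕ} (a b c d : Fin n) :
    cliffRoot a b * cliffRoot c d + cliffRoot c d * cliffRoot a b =
      algebraMap ℝ (NegCl n) (-(2 * (rootVec a b ⬝ᵥ rootVec c d))) := by
  rw [cliffRoot, cliffRoot, CliffordAlgebra.ι_mul_ι_add_swap, polar_weightedSumSquares_neg_one]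

theorem cliffRoot_anticomm {n : ℕ} {a b c d : Fin n} (hac : a ≠ c) (had : a ≠ d) (hbc : b ≠ c)
    (hbd : b ≠ d) : cliffRoot a b * cliffRoot c d = -(cliffRoot c d * cliffRoot a b) := by
  rw [eq_neg_iff_add_eq_zero, cliffRoot_mul_add_swap, rootVec_dotProduct]
  simp [hac, had, hbc, hbd]

theorem cliffRoot_mul_add_swap_adjacent {n : ℕ} {a b c : Fin n} (hab : a ≠ b) (hac : a ≠ c)
    (hbc : b ≠ c) :
    cliffRoot a b * cliffRoot b c + cliffRoot b c * cliffRoot a b = 1 := by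
  rw [cliffRoot_mul_add_swap, rootVec_dotProduct]
  simp [hab, hac, hbc]

theorem cliffRoot_conj {n : ℕ} {a b c : Fin n} (hab : a ≠ b) (hac : a ≠ c) (hbc : b ≠ c) :
    cliffRoot a b * cliffRoot b c * cliffRoot a b = cliffRoot a c := by
  rw [mul_assoc, eq_sub_iff_add_eq'.mpr (cliffRoot_mul_add_swap_adjacent hab hac hbc), mul_sub,
    ← mul_assoc, cliffRoot_mul_self hab, mul_one, neg_one_mul, sub_neg_eq_add]
  simp only [cliffRoot, ← map_add, rootVec_add]

theorem cliffRoot_conj_symm {n : ℕ} {a b c : Fin n} (hab : a ≠ b) (hac : a ≠ c) (hbc : b ≠ c) :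
    cliffRoot b c * cliffRoot a b * cliffRoot b c = cliffRoot a c := by
  rw [mul_assoc, eq_sub_iff_add_eq.mpr (cliffRoot_mul_add_swap_adjacent hab hac hbc), mul_sub,
    ← mul_assoc, cliffRoot_mul_self hbc, mul_one, neg_one_mul, sub_neg_eq_add]
  simp only [cliffRoot, ← map_add, add_comm (rootVec b c), rootVec_add]

/-- `cliffRoot a b` as a unit of the Clifford algebra. -/
noncomputable def cliffRootUnit {n : ℕ} (a b : Fin n) (h : a ≠ b) : (NegCl n)ˣ where
  val := cliffRoot a b
  inv := -cliffRoot a b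
  val_inv := by rw [mul_neg, cliffRoot_mul_self h, neg_neg]
  inv_val := by rw [neg_mul, cliffRoot_mul_self h, neg_neg]

theorem finL_ne_finR (n : ℕ) (i : Fin (n - 1)) : finL n i ≠ finR n i := by
  simp [finL, finR, Fin.ext_iff]

/-- The images of the generators of `S̃ₙ` under the spin representation. -/
noncomputable def spinGen (n : ℕ) : Fin (n - 1) ⊕ Unit → (NegCl n)ˣ :=
  Sum.elim (fun i => cliffRootUnit (finL n i) (finR n i) (finL_ne_finR n i)) fun _ => -1

theorem spinGen_rels (n : ℕ) : ∀ w ∈ spinRels n, FreeGroup.lift (spinGen n) w = 1 := by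
  rintro w ((((rfl | ⟨i, rfl⟩) | ⟨i, rfl⟩) | ⟨i, j, hij, rfl⟩) | ⟨i, j, hij, rfl⟩)
  · simp [zF, spinGen]
  · simp [zF, tF, spinGen]
  · simp only [zF, tF, map_mul, map_inv, FreeGroup.lift_apply_of, mul_inv_eq_one]
    ext
    simpa [spinGen, cliffRootUnit] using cliffRoot_mul_self (finL_ne_finR n i)
  · simp only [zF, tF, map_mul, map_inv, FreeGroup.lift_apply_of, mul_inv_eq_one]
    ext
    have := lt_abs.mp hij
    simp only [spinGen, cliffRootUnit, Sum.elim_inl, Sum.elim_inr, Units.val_mul, Units.val_neg,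
      neg_mul, one_mul]
    apply cliffRoot_anticomm <;> simp only [finL, finR, ne_eq, Fin.ext_iff] <;> omega
  · simp only [tF, map_mul, map_inv, FreeGroup.lift_apply_of, mul_inv_eq_one]
    have hLR : finL n j = finR n i := by simp [finL, finR, hij]
    have h1 : finL n i ≠ finR n j := by simp only [finL, finR, ne_eq, Fin.ext_iff]; omega
    have h2 : finR n i ≠ finR n j := by simp only [finR, ne_eq, Fin.ext_iff]; omega
    ext
    simp only [spinGen, cliffRootUnit, Sum.elim_inl, Units.val_mul, hLR]
    rw [cliffRoot_conj (finL_ne_finR n i) h1 h2, cliffRoot_conj_symm (finL_ne_finR n i) h1 h2]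

/-- The spin representation of `S̃ₙ` in the Clifford algebra. -/
noncomputable def spinRep (n : ℕ) : SpinSym n →* (NegCl n)ˣ :=
  PresentedGroup.toGroup (spinGen_rels n)

theorem spinRep_ttN {n k : ℕ} (hk : k + 1 < n) :
    (spinRep n (ttN n k) : NegCl n) = cliffRoot ⟨k, by omega⟩ ⟨k + 1, hk⟩ := by
  rw [ttN, dif_pos (by omega), tt, spinRep, PresentedGroup.toGroup.of]
  rfl

theorem ttilCore_eq_conj {n i j : ℕ} (h : i + 1 < j) :
    ttilCore n i j = ttN n i * ttilCore n (i + 1) j * ttN n i := by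
  obtain ⟨m, rfl⟩ : ∃ m, j = i + 2 + m := ⟨j - (i + 2), by omega⟩
  have h1 : i + 2 + m - i = m + 1 + 1 := by omega
  have h2 : i + 2 + m - 1 - i = m + 1 := by omega
  have h3 : i + 2 + m - (i + 1) = m + 1 := by omega
  have h4 : i + 2 + m - 1 - (i + 1) = m := by omega
  rw [ttilCore, ttilCore, h1, h2, h3, h4, List.range'_succ (n := m + 1),
    List.range'_succ (s := i) (n := m)]
  simp only [List.reverse_cons, List.map_append, List.map_cons, List.prod_append, List.prod_cons,
    List.map_nil, List.prod_nil, mul_one, List.cons_append, mul_assoc]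

theorem spinRep_ttilCore {n : ℕ} {i j : ℕ} (hij : i < j) (hj : j < n) :
    (spinRep n (ttilCore n i j) : NegCl n) = cliffRoot ⟨i, hij.trans hj⟩ ⟨j, hj⟩ := by
  induction hm : j - i using Nat.strong_induction_on generalizing i with
  | _ m ih =>
    rcases eq_or_lt_of_le (Nat.succ_le_of_lt hij) with rfl | h
    · exact ttilCore_succ n i ▸ spinRep_ttN hj
    · rw [ttilCore_eq_conj h, map_mul, map_mul, Units.val_mul, Units.val_mul,
        spinRep_ttN (by omega), ih (j - (i + 1)) (by omega) h rfl]
      apply cliffRoot_conj <;> simp only [ne_eq, Fin.ext_iff] <;> omega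

theorem ttil_not_commute {n : ℕ} {i j k l : Fin n} (hij : i < j) (hkl : k < l)
    (hik : i ≠ k) (hil : i ≠ l) (hjk : j ≠ k) (hjl : j ≠ l) :
    ttil n i j * ttil n k l ≠ ttil n k l * ttil n i j := by
  intro h
  rw [ttil, if_neg (by simpa using hij.le), ttil, if_neg (by simpa using hkl.le)] at h
  have h2 := congrArg (fun g => (spinRep n g : NegCl n)) h
  simp only [map_mul, Units.val_mul, spinRep_ttilCore (Fin.lt_def.mp hij) j.2,
    spinRep_ttilCore (Fin.lt_def.mp hkl) l.2] at h2
  have hanti : cliffRoot i j * cliffRoot k l = -(cliffRoot k l * cliffRoot i j) :=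
    cliffRoot_anticomm hik hil hjk hjl
  have hzero : cliffRoot i j * cliffRoot k l = 0 := by
    have : IsAddTorsionFree (NegCl n) := .of_module_rat _
    exact self_eq_neg.mp (hanti.trans (congrArg _ h2.symm))
  exact (cliffRootUnit i j hij.ne * cliffRootUnit k l hkl.ne).ne_zero hzero

theorem List.prod_map_eq_mul_of_lt {α M : Type*} [LinearOrder α] [Monoid M] (F : α → M) {a b : α}
    (hab : a < b) (hF : ∀ c, c ≠ a → c ≠ b → F c = 1) (L : List α) (hL : L.Pairwise (· < ·))
    (ha : a ∈ L) (hb : b ∈ L) : (L.map F).prod = F a * F b := by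
  induction L with
  | nil => simp at ha
  | cons c L ih =>
    rw [List.pairwise_cons] at hL
    rw [List.map_cons, List.prod_cons]
    by_cases hca : c = a
    · subst hca
      have hbL : b ∈ L := (List.mem_cons.mp hb).resolve_left hab.ne'
      rw [List.prod_map_eq_pow_single b F fun d hdb hd => hF d (hL.1 d hd).ne' hdb,
        List.count_eq_one_of_mem (hL.2.imp ne_of_lt) hbL, pow_one]
    · have haL : a ∈ L := (List.mem_cons.mp ha).resolve_left (Ne.symm hca)
      have hcb : c ≠ b := ((hL.1 a haL).trans hab).ne
      rw [hF c hca hcb, one_mul]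
      exact ih hL.2 haL ((List.mem_cons.mp hb).resolve_left hcb.symm)

theorem prod_swap_apply_of_lt {n : ℕ} {f : Fin n → Fin n} (hf : ∀ k, f k ≤ k) {L : List (Fin n)}
    {k : Fin n} (hL : ∀ a ∈ L, a < k) : (L.map fun a => swap (f a) a).prod k = k := by
  induction L with
  | nil => rfl
  | cons a L ih =>
    rw [List.forall_mem_cons] at hL
    rw [List.map_cons, List.prod_cons, Perm.mul_apply, ih hL.2]
    exact swap_apply_of_ne_of_ne ((hf a).trans_lt hL.1).ne' hL.1.ne'

theorem eq_of_prod_swap_eq {n : ℕ} {f g : Fin n → Fin n} (hf : ∀ k, f k ≤ k) (hg : ∀ k, g k ≤ k)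
    (L : List (Fin n)) (hL : L.Pairwise (· < ·))
    (h : (L.map fun a => swap (f a) a).prod = (L.map fun a => swap (g a) a).prod) :
    ∀ a ∈ L, f a = g a := by
  induction L using List.reverseRecOn with
  | nil => simp
  | append_singleton L k ih =>
    have hk : ∀ a ∈ L, a < k := fun a ha =>
      (List.pairwise_append.mp hL).2.2 a ha k (List.mem_singleton_self k)
    simp only [List.map_append, List.map_cons, List.map_nil, List.prod_append,
      List.prod_singleton] at h
    have hfg : f k = g k := by
      have h1 := congrArg (fun p : Perm (Fin n) => p (f k)) h
      simp only [Perm.mul_apply, swap_apply_left, prod_swap_apply_of_lt hf hk] at h1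
      have h2 := (Equiv.injective _) (h1.symm.trans (prod_swap_apply_of_lt hg hk).symm)
      rw [swap_apply_eq_iff, swap_apply_right] at h2
      exact h2
    rw [hfg, mul_left_inj] at h
    intro a ha
    rcases List.mem_append.mp ha with ha | ha
    · exact ih (List.pairwise_append.mp hL).1 h a ha
    · rw [List.mem_singleton.mp ha, hfg]

theorem IsFactorization.unique {n : ℕ} {x : Perm (Fin n)} {f g : Fin n → Fin n}
    (hf : IsFactorization n x f) (hg : IsFactorization n x g) : f = g :=
  funext fun a => eq_of_prod_swap_eq hf.1 hg.1 _ (List.pairwise_lt_finRange n)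
    (hf.2.symm.trans hg.2) a (List.mem_finRange a)

theorem sec_eq {n : ℕ} {x : Perm (Fin n)} {f : Fin n → Fin n} (hf : IsFactorization n x f) :
    sec n x = ((List.finRange n).map fun k => ttil n (f k) k).prod := by
  have h : ∃ f, IsFactorization n x f := ⟨f, hf⟩
  rw [sec, dif_pos h, h.choose_spec.unique hf]

theorem ttil_self (n i : ℕ) : ttil n i i = 1 := by
  simp [ttil, ttilCore]

theorem sec_swap {n : ℕ} {i j : Fin n} (hij : i < j) : sec n (swap i j) = ttil n i j := by
  have key {M : Type} [Monoid M] (F : Fin n → Fin n → M) (hF : ∀ c, F c c = 1) :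
      ((List.finRange n).map fun c => F (Function.update id j i c) c).prod = F i j := by
    rw [List.prod_map_eq_pow_single j _ fun c hc _ => by simp [hc, hF],
      List.count_eq_one_of_mem (List.nodup_finRange n) (List.mem_finRange j)]
    simp
  rw [sec_eq (f := Function.update id j i), key (fun a b => ttil n a b) fun c => ttil_self n c]
  refine ⟨fun c => ?_, (key swap swap_self).symm⟩
  rcases eq_or_ne c j with rfl | hc
  · simpa using hij.le
  · simp [hc]

theorem sec_swap_mul_swap {n : ℕ} {i j k l : Fin n} (hij : i < j) (hkl : k < l) (hjl : j < l) :
    sec n (swap i j * swap k l) = ttil n i j * ttil n k l := by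
  set f : Fin n → Fin n := Function.update (Function.update id j i) l k with hf
  have hfj : f j = i := by simp [hf, hjl.ne]
  have hfl : f l = k := by simp [hf]
  have hfc : ∀ c, c ≠ j → c ≠ l → f c = c := fun c hcj hcl => by simp [hf, hcj, hcl]
  have key {M : Type} [Monoid M] (F : Fin n → Fin n → M) (hF : ∀ c, F c c = 1) :
      ((List.finRange n).map fun c => F (f c) c).prod = F i j * F k l := by
    rw [List.prod_map_eq_mul_of_lt _ hjl (fun c hcj hcl => by rw [hfc c hcj hcl, hF])
      _ (List.pairwise_lt_finRange n) (List.mem_finRange j) (List.mem_finRange l), hfj, hfl]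
  rw [sec_eq (f := f), key (fun a b => ttil n a b) fun c => ttil_self n c]
  refine ⟨fun c => ?_, (key swap swap_self).symm⟩
  rcases eq_or_ne c j with rfl | hcj
  · exact hfj ▸ hij.le
  rcases eq_or_ne c l with rfl | hcl
  · exact hfl ▸ hkl.le
  · exact (hfc c hcj hcl).le

theorem coc_add_coc_of_lt {n : ℕ} {i j k l : Fin n} (hij : i < j) (hkl : k < l)
    (hjl : j < l) (hik : i ≠ k) (hil : i ≠ l) (hjk : j ≠ k) :
    coc n (swap i j) (swap k l) + coc n (swap k l) (swap i j) = 1 := by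
  have hcomm : swap k l * swap i j = swap i j * swap k l := by
    ext c
    simp only [Perm.mul_apply, swap_apply_def]
    grind
  rw [coc, coc, hcomm, sec_swap_mul_swap hij hkl hjl, sec_swap hij, sec_swap hkl, if_pos rfl,
    if_neg (ttil_not_commute hij hkl hik hil hjk hjl.ne).symm, zero_add]

theorem cocycle_disjoint_transpositions (n : ℕ) (hn : 2 ≤ n) (i j k l : Fin n)
    (hij : i ≠ j) (hkl : k ≠ l)
    (hik : i ≠ k) (hil : i ≠ l) (hjk : j ≠ k) (hjl : j ≠ l) :
    coc n (Equiv.swap i j) (Equiv.swap k l) + coc n (Equiv.swap k l) (Equiv.swap i j) = 1 := by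
  wlog h₁ : i < j generalizing i j
  · rw [swap_comm i j]
    exact this j i hij.symm hjk hjl hik hil (lt_of_le_of_ne (not_lt.mp h₁) hij.symm)
  wlog h₂ : k < l generalizing k l
  · rw [swap_comm k l]
    exact this l k hkl.symm hil hik hjl hjk (lt_of_le_of_ne (not_lt.mp h₂) hkl.symm)
  rcases lt_or_gt_of_ne hjl with h | h
  · exact coc_add_coc_of_lt h₁ h₂ h hik hil hjk
  · rw [add_comm]
    exact coc_add_coc_of_lt h₂ h₁ h hik.symm hjk.symm hil.symm
end
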